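/- Let w ∈ ℝ^d with ‖w‖₂ = 1, let x_orig ∈ ℝ^d, and let x ∈ ℝ^d be a perturbed sample with ‖x_orig − x‖₂ ≤ ε for some ε > 0. Let x_cf := x_orig − (wᵀx_orig)·w and let x_cf' be any point with ‖x − x_cf'‖₂ ≤ ‖x − x_cf‖₂ (the minimality property of the closest counterfactual of x). Then ‖x_cf − x_cf'‖₂ ≤ 2ε + 2|wᵀx_orig|. -/

import Mathlib

open RealInnerProductSpace

/-- Bound on closest counterfactuals of perturbed samples for a binary linear
classifier (Corollary 1 of the paper): with `x_cf = x_orig − (wᵀx_orig)·w` and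
`x_cf'` at least as close to the perturbed sample `x` as `x_cf` is,
`‖x_cf − x_cf'‖₂ ≤ 2ε + 2|wᵀx_orig|`. -/
theorem closest_counterfactual_perturbation_bound_linear_classifier
    (d : ℕ) (w xorig x xcf' : EuclideanSpace ℝ (Fin d)) (hw : ‖w‖ = 1)
    (ε : ℝ) (hε : 0 < ε)
    (hpert : ‖xorig - x‖ ≤ ε)
    (hmin : ‖x - xcf'‖ ≤ ‖x - (xorig - ⟪w, xorig⟫ • w)‖) :
    ‖(xorig - ⟪w, xorig⟫ • w) - xcf'‖ ≤ 2 * ε + 2 * |⟪w, xorig⟫| := by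
  have h0 : ‖⟪w, xorig⟫ • w‖ = |⟪w, xorig⟫| := by
    rw [norm_smul, hw, mul_one, Real.norm_eq_abs]
  generalize ⟪w, xorig⟫ = c at *
  have h1 : ‖x - (xorig - c • w)‖ ≤ ‖xorig - x‖ + ‖c • w‖ := by
    have e : x - (xorig - c • w) = c • w - (xorig - x) := by abel
    rw [e, add_comm]
    exact norm_sub_le _ _
  have h2 : ‖(xorig - c • w) - xcf'‖ ≤ ‖(xorig - c • w) - x‖ + ‖x - xcf'‖ :=
    norm_sub_le_norm_sub_add_norm_sub _ _ _
  rw [norm_sub_rev (xorig - c • w) x] at h2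
  linarith
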